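/- Assume the uniform ellipticity condition (D3) and that the probability measure m on ℝ has a finite first moment. Let F be the unique weak solution in 𝓕 of the Cauchy problem with initial condition F₀ = H*m, and suppose that for every s > 0 the function F_s is continuous on ℝ. Then for all t ≥ 0, ∫₀¹ F_t^{-1}(u) du = ∫₀¹ F₀^{-1}(u) du + t·B(1); in particular, if B(1) = 0 the expectation of F_t is constant in time. -/

import Mathlib

open MeasureTheory Set Filter Topology Function
open scoped ENNReal

noncomputable section

/-- `primitive f u = ∫₀^u f(v) dv`. -/
def primitive (f : ℝ → ℝ) : ℝ → ℝ := fun u => ∫ v in (0:ℝ)..u, f v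

/-- The cumulative distribution function `H * μ` of a measure `μ` on `ℝ`. -/
def cdfOf (μ : MeasureTheory.Measure ℝ) : ℝ → ℝ := fun x => (μ (Set.Iic x)).toReal

/-- Pseudo-inverse of a cdf: `F⁻¹(u) = inf {x | F x > u}`. -/
def pinv (F : ℝ → ℝ) (u : ℝ) : ℝ := sInf {x : ℝ | u < F x}

/-- Wasserstein distance of order `p` between two cdfs, in `[0,∞]`. -/
def Wdist (p : ℝ) (F G : ℝ → ℝ) : ℝ≥0∞ :=
  (∫⁻ u in Set.Ioo (0:ℝ) 1, ENNReal.ofReal (|pinv F u - pinv G u| ^ p)) ^ (1/p)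

/-- `F` is the cumulative distribution function of a probability measure on `ℝ`. -/
def IsCDF (F : ℝ → ℝ) : Prop :=
  Monotone F ∧ (∀ x : ℝ, ContinuousWithinAt F (Set.Ici x) x) ∧
    Tendsto F atBot (nhds 0) ∧ Tendsto F atTop (nhds 1)

/-- `F` solves the stationary equation `(1/2) ∂ₓₓ (A(F)) - ∂ₓ (B(F)) = 0` in the sense
of distributions. -/
def IsStationarySolution (A B : ℝ → ℝ) (F : ℝ → ℝ) : Prop :=
  ∀ φ : ℝ → ℝ, ContDiff ℝ (⊤ : ℕ∞) φ → HasCompactSupport φ →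
    (1/2) * (∫ x : ℝ, A (F x) * deriv (deriv φ) x) + (∫ x : ℝ, B (F x) * deriv φ x) = 0

/-- `Ψ(u) = ∫_{1/2}^u a(v) / (2 B(v)) dv`. -/
def Psi (a b : ℝ → ℝ) (u : ℝ) : ℝ := ∫ v in (1/2:ℝ)..u, a v / (2 * primitive b v)

/-- The inverse of `Ψ`, extended by `1` above `lim_{u→1} Ψ(u)` and by `0` below
`lim_{u→0} Ψ(u)` when these limits are finite. -/
def PsiInv (a b : ℝ → ℝ) (x : ℝ) : ℝ :=
  sSup {u : ℝ | u ∈ Set.Ioo (0:ℝ) 1 ∧ Psi a b u ≤ x}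

/-- `F` is a weak solution of `∂ₜ F = (1/2) ∂ₓₓ (A (F)) - ∂ₓ (B (F))` with
initial condition `F₀`. -/
def IsWeakSolution (A B : ℝ → ℝ) (F₀ : ℝ → ℝ) (F : ℝ → ℝ → ℝ) : Prop :=
  ∀ g : ℝ → ℝ → ℝ, ContDiff ℝ (⊤ : ℕ∞) (Function.uncurry g) →
    HasCompactSupport (Function.uncurry g) →
    ∀ t : ℝ, 0 ≤ t →
      ((∫ x : ℝ, g t x * F t x) - ∫ x : ℝ, g 0 x * F₀ x) =
        ∫ x : ℝ, ∫ s in (0:ℝ)..t,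
          ((1/2) * A (F s x) * deriv (deriv (fun y => g s y)) x
            + B (F s x) * deriv (fun y => g s y) x
            + F s x * deriv (fun r => g r x) s)

/-- Membership in the class `𝓕`. -/
def MemF (F : ℝ → ℝ → ℝ) : Prop :=
  ∃ P : ℝ → ProbabilityMeasure ℝ,
    ContinuousOn P (Set.Ici 0) ∧
    (∀ t : ℝ, 0 ≤ t → Integrable (fun x => |x|) (P t : Measure ℝ)) ∧
    (∀ T : ℝ, 0 < T → IntegrableOn (fun t => ∫ x, |x| ∂(P t : Measure ℝ)) (Set.Icc 0 T)) ∧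
    (∀ t : ℝ, 0 ≤ t → ∀ x : ℝ, F t x = ((P t : Measure ℝ) (Set.Iic x)).toReal)

/-!
For a probability measure `μ` with a first moment, `∫₀¹ F_μ⁻¹(u) du` is its expectation, and by
Fubini `∫ (F_μ - F_ν) dx = ∫ x dν - ∫ x dμ`, since `F_μ(x) - F_ν(x)` is the average of
`1_{v ≤ x} - 1_{w ≤ x}` over `(v, w)` drawn from `μ ⊗ ν`. Testing the equation with `χ(x / R)`,
where `χ` is a bump function with `χ(0) = 1`, and letting `R → ∞`, the left-hand side tends to
`∫ (F_t - F₀) dx`. On the right `A(F_s)` and `B(F_s)` are bounded, so the diffusion term is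
`O(1 / R)`, while the drift term `∫ K(R y) χ'(y) dy` with `K = ∫₀ᵗ B(F_s) ds` only sees the limits
`K(-∞) = t B(0)` and `K(+∞) = t B(1)`, and tends to `-t (B(1) - B(0))`.
-/

section

open ProbabilityTheory

lemma cdfOf_eq_cdf (μ : Measure ℝ) [IsProbabilityMeasure μ] : cdfOf μ = cdf μ :=
  funext fun x => (cdf_eq_real μ x).symm

section Quantile

variable (μ : Measure ℝ) {u x : ℝ}

lemma pinv_cdf_le (hu : 0 < u) (h : u < cdf μ x) : pinv (cdf μ) u ≤ x := by
  obtain ⟨y, hy⟩ := ((tendsto_cdf_atBot μ).eventually_lt_const hu).exists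
  exact csInf_le ⟨y, fun _ hz => ((monotone_cdf μ).reflect_lt (hy.trans hz)).le⟩ h

lemma le_cdf_of_pinv_cdf_le (hu : u < 1) (h : pinv (cdf μ) u ≤ x) : u ≤ cdf μ x := by
  have hne : {x | u < cdf μ x}.Nonempty := ((tendsto_cdf_atTop μ).eventually_const_lt hu).exists
  have hright : Tendsto (cdf μ) (𝓝[>] x) (𝓝 (cdf μ x)) :=
    ((cdf μ).right_continuous x).mono_left (nhdsWithin_mono _ Ioi_subset_Ici_self)
  refine ge_of_tendsto hright ?_
  filter_upwards [self_mem_nhdsWithin] with y hy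
  obtain ⟨z, hz, hzy⟩ := exists_lt_of_csInf_lt hne (h.trans_lt hy)
  exact hz.le.trans (monotone_cdf μ hzy.le)

lemma monotoneOn_pinv_cdf : MonotoneOn (pinv (cdf μ)) (Ioo 0 1) := fun _ hu _ hv huv =>
  le_csInf ((tendsto_cdf_atTop μ).eventually_const_lt hv.2).exists
    fun _ hx => pinv_cdf_le μ hu.1 (huv.trans_lt hx)

lemma aemeasurable_pinv_cdf : AEMeasurable (pinv (cdf μ)) (volume.restrict (Ioo 0 1)) :=
  aemeasurable_restrict_of_monotoneOn measurableSet_Ioo (monotoneOn_pinv_cdf μ)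

lemma map_pinv_cdf [IsProbabilityMeasure μ] :
    (volume.restrict (Ioo 0 1)).map (pinv (cdf μ)) = μ := by
  refine Measure.ext_of_Iic _ _ fun x => ?_
  rw [Measure.map_apply_of_aemeasurable (aemeasurable_pinv_cdf μ) measurableSet_Iic,
    Measure.restrict_apply₀' measurableSet_Ioo.nullMeasurableSet, ← ofReal_cdf]
  apply le_antisymm
  · calc volume (pinv (cdf μ) ⁻¹' Iic x ∩ Ioo 0 1)
        ≤ volume (Ioc 0 (cdf μ x)) :=
          measure_mono fun u ⟨hux, hu⟩ => ⟨hu.1, le_cdf_of_pinv_cdf_le μ hu.2 hux⟩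
      _ = ENNReal.ofReal (cdf μ x) := by simp
  · calc ENNReal.ofReal (cdf μ x)
        = volume (Ioo 0 (cdf μ x)) := by simp
      _ ≤ volume (pinv (cdf μ) ⁻¹' Iic x ∩ Ioo 0 1) :=
          measure_mono fun u ⟨hu, hux⟩ =>
            ⟨pinv_cdf_le μ hu hux, hu, hux.trans_le (cdf_le_one μ x)⟩

lemma integral_pinv_cdf [IsProbabilityMeasure μ] :
    ∫ u in Ioo 0 1, pinv (cdf μ) u = ∫ x, x ∂μ := by
  conv_rhs => rw [← map_pinv_cdf μ]
  exact (integral_map (aemeasurable_pinv_cdf μ) aestronglyMeasurable_id).symm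

end Quantile

section CdfDifference

/-- The difference `1_{v ≤ x} - 1_{w ≤ x}` of two Heaviside functions, as a kernel in
`p = (v, w)` and `x`. It is encoded by the intervals where it takes the values `1` and `-1`,
which makes its integrability in `x` visible. -/
def heavisideSub (p : ℝ × ℝ) (x : ℝ) : ℝ :=
  (Ico p.1 p.2).indicator 1 x - (Ico p.2 p.1).indicator 1 x

lemma heavisideSub_eq (p : ℝ × ℝ) (x : ℝ) :
    heavisideSub p x = (Iic x).indicator 1 p.1 - (Iic x).indicator 1 p.2 := by
  simp only [heavisideSub, indicator, mem_Iic, mem_Ico, Pi.one_apply]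
  grind

lemma norm_heavisideSub (p : ℝ × ℝ) (x : ℝ) :
    ‖heavisideSub p x‖ = (Ico p.1 p.2).indicator 1 x + (Ico p.2 p.1).indicator 1 x := by
  simp only [heavisideSub, indicator, mem_Ico, Pi.one_apply, Real.norm_eq_abs]
  grind

lemma integrable_indicator_Ico_one (v w : ℝ) :
    Integrable ((Ico v w).indicator (1 : ℝ → ℝ)) :=
  (integrableOn_const (by simp) (by simp)).integrable_indicator measurableSet_Ico

lemma integrable_heavisideSub (p : ℝ × ℝ) : Integrable (heavisideSub p) :=
  (integrable_indicator_Ico_one _ _).sub (integrable_indicator_Ico_one _ _)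

lemma integral_heavisideSub (p : ℝ × ℝ) : ∫ x, heavisideSub p x = p.2 - p.1 := by
  simp only [heavisideSub]
  rw [integral_sub (integrable_indicator_Ico_one _ _) (integrable_indicator_Ico_one _ _),
    integral_indicator_one measurableSet_Ico, integral_indicator_one measurableSet_Ico,
    Real.volume_real_Ico, Real.volume_real_Ico]
  grind

lemma integral_norm_heavisideSub (p : ℝ × ℝ) : ∫ x, ‖heavisideSub p x‖ = ‖p.2 - p.1‖ := by
  simp only [norm_heavisideSub]
  rw [integral_add (integrable_indicator_Ico_one _ _) (integrable_indicator_Ico_one _ _),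
    integral_indicator_one measurableSet_Ico, integral_indicator_one measurableSet_Ico,
    Real.volume_real_Ico, Real.volume_real_Ico, Real.norm_eq_abs]
  grind

lemma measurable_uncurry_heavisideSub : Measurable (uncurry heavisideSub) := by
  have hIco {f g : (ℝ × ℝ) × ℝ → ℝ} (hf : Measurable f) (hg : Measurable g) :
      Measurable fun q => (Ico (f q) (g q)).indicator (1 : ℝ → ℝ) q.2 :=
    measurable_one.indicator (s := {q | f q ≤ q.2 ∧ q.2 < g q})
      ((measurableSet_le hf measurable_snd).inter (measurableSet_lt measurable_snd hg))
  exact (hIco (by fun_prop) (by fun_prop)).sub (hIco (by fun_prop) (by fun_prop))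

variable {μ ν : Measure ℝ} [IsProbabilityMeasure μ] [IsProbabilityMeasure ν]

lemma integral_heavisideSub_prod (x : ℝ) :
    ∫ p, heavisideSub p x ∂(μ.prod ν) = cdf μ x - cdf ν x := by
  have hint (ρ : Measure ℝ) [IsProbabilityMeasure ρ] :
      Integrable ((Iic x).indicator (1 : ℝ → ℝ)) ρ :=
    (integrable_const 1).indicator measurableSet_Iic
  simp only [heavisideSub_eq]
  rw [integral_sub ((hint μ).comp_fst ν) ((hint ν).comp_snd μ), integral_fun_fst,
    integral_fun_snd, integral_indicator_one measurableSet_Iic,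
    integral_indicator_one measurableSet_Iic, cdf_eq_real, cdf_eq_real]
  simp

variable (hμ : Integrable (fun x => x) μ) (hν : Integrable (fun x => x) ν)
include hμ hν

lemma integrable_uncurry_heavisideSub :
    Integrable (uncurry heavisideSub) ((μ.prod ν).prod volume) := by
  rw [integrable_prod_iff measurable_uncurry_heavisideSub.aestronglyMeasurable]
  refine ⟨.of_forall integrable_heavisideSub, ?_⟩
  simp only [uncurry, integral_norm_heavisideSub]
  exact ((hν.comp_snd μ).sub (hμ.comp_fst ν)).norm

lemma integrable_cdf_sub_cdf : Integrable fun x => cdf μ x - cdf ν x := by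
  simpa only [uncurry, integral_heavisideSub_prod] using
    (integrable_uncurry_heavisideSub hμ hν).integral_prod_right

lemma integral_cdf_sub_cdf :
    ∫ x, (cdf μ x - cdf ν x) = (∫ x, x ∂ν) - ∫ x, x ∂μ := by
  calc ∫ x, (cdf μ x - cdf ν x)
      = ∫ x, ∫ p, heavisideSub p x ∂(μ.prod ν) := by simp only [integral_heavisideSub_prod]
    _ = ∫ p, (∫ x, heavisideSub p x) ∂(μ.prod ν) :=
        (integral_integral_swap (integrable_uncurry_heavisideSub hμ hν)).symm
    _ = ∫ p, (p.2 - p.1) ∂(μ.prod ν) := by simp only [integral_heavisideSub]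
    _ = (∫ x, x ∂ν) - ∫ x, x ∂μ := by
        rw [integral_sub (hν.comp_snd μ) (hμ.comp_fst ν), integral_fun_fst (fun x => x),
          integral_fun_snd (fun x => x)]
        simp

end CdfDifference

section Rescaling

lemma tendsto_integral_comp_inv_mul_left_mul {χ f : ℝ → ℝ} {C : ℝ} (hχ : Continuous χ)
    (hC : ∀ x, ‖χ x‖ ≤ C) (hf : Integrable f) :
    Tendsto (fun R : ℝ => ∫ x, χ (R⁻¹ * x) * f x) atTop (𝓝 (χ 0 * ∫ x, f x)) := by
  rw [← integral_const_mul]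
  refine tendsto_integral_filter_of_dominated_convergence (fun x => C * ‖f x‖)
    (.of_forall fun R => .mul (by fun_prop) hf.1)
    (.of_forall fun R => .of_forall fun x => ?_) (hf.norm.const_mul C)
    (.of_forall fun x => .mul_const _ ((hχ.tendsto 0).comp ?_))
  · rw [norm_mul]
    gcongr
    exact hC _
  · simpa using tendsto_inv_atTop_zero.mul_const x

lemma tendsto_integral_comp_mul_left_mul {K ψ : ℝ → ℝ} {C l₁ l₂ : ℝ} (hK : Measurable K)
    (hC : ∀ x, ‖K x‖ ≤ C) (hbot : Tendsto K atBot (𝓝 l₁)) (htop : Tendsto K atTop (𝓝 l₂))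
    (hψ : Integrable ψ) :
    Tendsto (fun R : ℝ => ∫ y, K (R * y) * ψ y) atTop
      (𝓝 (l₁ * (∫ y in Iic 0, ψ y) + l₂ * ∫ y in Ioi 0, ψ y)) := by
  have hlim : l₁ * (∫ y in Iic 0, ψ y) + l₂ * ∫ y in Ioi 0, ψ y
      = ∫ y, ((Iic 0).indicator (fun y => l₁ * ψ y) y
          + (Ioi 0).indicator (fun y => l₂ * ψ y) y) := by
    rw [integral_add ((hψ.const_mul l₁).indicator measurableSet_Iic)
      ((hψ.const_mul l₂).indicator measurableSet_Ioi), integral_indicator measurableSet_Iic,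
      integral_indicator measurableSet_Ioi, integral_const_mul, integral_const_mul]
  rw [hlim]
  refine tendsto_integral_filter_of_dominated_convergence (fun y => C * ‖ψ y‖)
    (.of_forall fun R => .mul (hK.comp (measurable_const_mul R)).aestronglyMeasurable hψ.1)
    (.of_forall fun R => .of_forall fun y => ?_) (hψ.norm.const_mul C) ?_
  · rw [norm_mul]
    gcongr
    exact hC _
  · filter_upwards [compl_mem_ae_iff.2 (measure_singleton (0 : ℝ))] with y hy
    rcases lt_or_gt_of_ne hy with hy | hy
    · simpa [hy.le] using (hbot.comp (tendsto_id.atTop_mul_const_of_neg hy)).mul_const (ψ y)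
    · simpa [hy, hy.not_ge] using (htop.comp (tendsto_id.atTop_mul_const hy)).mul_const (ψ y)

lemma integral_mul_comp_inv_mul_left (f g : ℝ → ℝ) {R : ℝ} (hR : 0 < R) :
    ∫ x, f x * g (R⁻¹ * x) = R * ∫ y, f (R * y) * g y := by
  simpa [hR.ne', abs_of_pos hR] using
    Measure.integral_comp_inv_mul_left (fun y => f (R * y) * g y) R

variable {K χ : ℝ → ℝ} {C : ℝ}

lemma tendsto_integral_mul_deriv_comp_inv_mul_left {l₁ l₂ : ℝ} (hK : Measurable K)
    (hC : ∀ x, ‖K x‖ ≤ C) (hbot : Tendsto K atBot (𝓝 l₁)) (htop : Tendsto K atTop (𝓝 l₂))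
    (hχ : ContDiff ℝ 1 χ) (hχc : HasCompactSupport χ) :
    Tendsto (fun R : ℝ => ∫ x, K x * deriv (fun x => χ (R⁻¹ * x)) x) atTop
      (𝓝 ((l₁ - l₂) * χ 0)) := by
  have hχ' : Integrable (deriv χ) :=
    (hχ.continuous_deriv le_rfl).integrable_of_hasCompactSupport hχc.deriv
  have hlim := tendsto_integral_comp_mul_left_mul hK hC hbot htop hχ'
  rw [hχc.integral_Iic_deriv_eq hχ, hχc.integral_Ioi_deriv_eq hχ, mul_neg, ← sub_eq_add_neg,
    ← sub_mul] at hlim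
  refine hlim.congr' ?_
  filter_upwards [eventually_gt_atTop 0] with R hR
  simp_rw [deriv_comp_mul_left, smul_eq_mul, mul_left_comm (K _)]
  rw [integral_const_mul, integral_mul_comp_inv_mul_left _ _ hR, inv_mul_cancel_left₀ hR.ne']

lemma tendsto_integral_mul_deriv_deriv_comp_inv_mul_left (hC : ∀ x, ‖K x‖ ≤ C)
    (hχ : ContDiff ℝ 2 χ) (hχc : HasCompactSupport χ) :
    Tendsto (fun R : ℝ => ∫ x, K x * deriv (deriv (fun x => χ (R⁻¹ * x))) x) atTop (𝓝 0) := by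
  have hχ'' : Integrable (deriv (deriv χ)) := by
    have : Continuous (deriv (deriv χ)) := by
      simpa [iteratedDeriv_succ] using hχ.continuous_iteratedDeriv 2 le_rfl
    exact this.integrable_of_hasCompactSupport hχc.deriv.deriv
  have hbound : Tendsto (fun R : ℝ => R⁻¹ * (C * ∫ y, ‖deriv (deriv χ) y‖)) atTop (𝓝 0) := by
    simpa using tendsto_inv_atTop_zero.mul_const (C * ∫ y, ‖deriv (deriv χ) y‖)
  refine squeeze_zero_norm' ?_ hbound
  filter_upwards [eventually_gt_atTop 0] with R hR
  have hscale : ∫ x, K x * deriv (deriv (fun x => χ (R⁻¹ * x))) x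
      = R⁻¹ * ∫ y, K (R * y) * deriv (deriv χ) y := by
    have hderiv : deriv (fun x => χ (R⁻¹ * x)) = fun x => R⁻¹ * deriv χ (R⁻¹ * x) :=
      funext fun x => deriv_comp_mul_left _ _ _
    simp_rw [hderiv, deriv_const_mul_field, deriv_comp_mul_left, smul_eq_mul,
      mul_left_comm (K _)]
    rw [integral_const_mul, integral_const_mul, integral_mul_comp_inv_mul_left _ _ hR,
      inv_mul_cancel_left₀ hR.ne']
  rw [hscale, norm_mul, Real.norm_of_nonneg (inv_nonneg.2 hR.le), ← integral_const_mul]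
  gcongr
  refine norm_integral_le_of_norm_le (hχ''.norm.const_mul C) (.of_forall fun y => ?_)
  rw [norm_mul]
  gcongr
  exact hC _

end Rescaling

section Kernels

lemma measurable_toMeasure_of_continuous {X Ω : Type*} [TopologicalSpace X] [MeasurableSpace X]
    [OpensMeasurableSpace X] [TopologicalSpace Ω] [MeasurableSpace Ω] [BorelSpace Ω]
    [HasOuterApproxClosed Ω] {P : X → ProbabilityMeasure Ω} (hP : Continuous P) :
    Measurable fun x => (P x : Measure Ω) := by
  refine .measure_of_isPiSystem_of_isProbabilityMeasure
    (BorelSpace.measurable_eq (α := Ω)) isPiSystem_isOpen fun U hU => ?_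
  refine LowerSemicontinuous.measurable (lowerSemicontinuous_iff_le_liminf.2 fun x => ?_)
  exact ProbabilityMeasure.le_liminf_measure_open_of_tendsto (hP.tendsto x) hU

/-- For times `s < 0`, where `MemF` says nothing, the kernel is frozen at time `0`. -/
lemma MemF.exists_kernel {F : ℝ → ℝ → ℝ} (hF : MemF F) :
    ∃ κ : Kernel ℝ ℝ, IsMarkovKernel κ ∧
      (∀ s, 0 ≤ s → F s = cdfOf (κ s)) ∧ ∀ s, 0 ≤ s → Integrable (fun x => x) (κ s) := by
  obtain ⟨P, hP, hPint, -, hFP⟩ := hF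
  have hcont : Continuous fun s : ℝ => P (max s 0) :=
    hP.comp_continuous (by fun_prop) fun s => le_max_right s 0
  refine ⟨⟨fun s => P (max s 0), measurable_toMeasure_of_continuous hcont⟩,
    ⟨fun s => inferInstanceAs (IsProbabilityMeasure (P (max s 0) : Measure ℝ))⟩,
    fun s hs => ?_, fun s hs => ?_⟩
  · simp only [Kernel.coe_mk, max_eq_left hs]
    exact funext (hFP s hs)
  · simp only [Kernel.coe_mk, max_eq_left hs]
    exact (integrable_norm_iff aestronglyMeasurable_id).1 (hPint s hs)

lemma measurable_cdf_kernel {X : Type*} [MeasurableSpace X] (κ : Kernel X ℝ) [IsMarkovKernel κ] :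
    Measurable fun p : X × ℝ => cdf (κ p.1) p.2 := by
  simp only [cdf_eq_real]
  exact (Kernel.measurable_kernel_prodMk_left (κ := κ.comap Prod.fst measurable_fst)
    (measurableSet_le measurable_snd (measurable_snd.comp measurable_fst))).ennreal_toReal

variable (κ : Kernel ℝ ℝ) {G : ℝ → ℝ} (t : ℝ)

/-- The time integral `x ↦ ∫₀ᵗ G (F_s(x)) ds` along the cumulative distribution functions
`F_s` of a family `κ` of probability measures. With `G = A` and `G = B` these are the spatial
profiles against which `χ''` and `χ'` are integrated in the weak formulation. -/
def cdfTimeIntegral (κ : Kernel ℝ ℝ) (G : ℝ → ℝ) (t x : ℝ) : ℝ :=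
  ∫ s in (0 : ℝ)..t, G (cdf (κ s) x)

lemma cdf_mem_Icc (μ : Measure ℝ) (x : ℝ) : cdf μ x ∈ Icc (0 : ℝ) 1 :=
  ⟨cdf_nonneg μ x, cdf_le_one μ x⟩

lemma integrable_mul_cdf (μ : Measure ℝ) {f : ℝ → ℝ} (hf : Integrable f) :
    Integrable fun x => f x * cdf μ x :=
  hf.mul_bdd (c := 1) (monotone_cdf μ).measurable.aestronglyMeasurable
    (.of_forall fun x => (Real.norm_of_nonneg (cdf_nonneg μ x)).trans_le (cdf_le_one μ x))

lemma exists_norm_comp_cdf_le (hG : ContinuousOn G (Icc 0 1)) :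
    ∃ C, ∀ (μ : Measure ℝ) (x : ℝ), ‖G (cdf μ x)‖ ≤ C :=
  (isCompact_Icc.exists_bound_of_continuousOn hG).imp fun _ hC μ x => hC _ (cdf_mem_Icc μ x)

lemma exists_norm_cdfTimeIntegral_le (hG : ContinuousOn G (Icc 0 1)) :
    ∃ C, ∀ x, ‖cdfTimeIntegral κ G t x‖ ≤ C := by
  obtain ⟨C, hC⟩ := exists_norm_comp_cdf_le hG
  exact ⟨C * |t - 0|, fun x => intervalIntegral.norm_integral_le_of_norm_le_const
    fun s _ => hC (κ s) x⟩

variable [IsMarkovKernel κ] (hG : ContinuousOn G (Icc 0 1))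
include hG

lemma measurable_comp_cdf_kernel : Measurable fun p : ℝ × ℝ => G (cdf (κ p.1) p.2) :=
  hG.domRestrict.measurable.comp
    ((measurable_cdf_kernel κ).subtype_mk (h := fun p => cdf_mem_Icc (κ p.1) p.2))

lemma measurable_cdfTimeIntegral : Measurable (cdfTimeIntegral κ G t) := by
  have h := ((measurable_comp_cdf_kernel κ hG).comp measurable_swap).stronglyMeasurable
  exact (h.integral_prod_right (f := fun x s => G (cdf (κ s) x))).measurable.sub
    (h.integral_prod_right (f := fun x s => G (cdf (κ s) x))).measurable

lemma intervalIntegrable_comp_cdf_kernel (x : ℝ) :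
    IntervalIntegrable (fun s => G (cdf (κ s) x)) volume 0 t := by
  obtain ⟨C, hC⟩ := exists_norm_comp_cdf_le hG
  exact (intervalIntegrable_const (c := C)).mono_fun'
    ((measurable_comp_cdf_kernel κ hG).comp measurable_prodMk_right).aestronglyMeasurable
    (.of_forall fun s => hC (κ s) x)

lemma tendsto_cdfTimeIntegral {l : Filter ℝ} [l.IsCountablyGenerated] {v : ℝ}
    (hv : v ∈ Icc (0 : ℝ) 1) (h : ∀ s, Tendsto (cdf (κ s)) l (𝓝 v)) :
    Tendsto (cdfTimeIntegral κ G t) l (𝓝 (t * G v)) := by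
  obtain ⟨C, hC⟩ := exists_norm_comp_cdf_le hG
  have hlim : ∫ _ in (0 : ℝ)..t, G v = t * G v := by simp
  rw [← hlim]
  refine intervalIntegral.tendsto_integral_filter_of_dominated_convergence (fun _ => C)
    (.of_forall fun x =>
      ((measurable_comp_cdf_kernel κ hG).comp measurable_prodMk_right).aestronglyMeasurable)
    (.of_forall fun x => .of_forall fun s _ => hC (κ s) x)
    intervalIntegrable_const (.of_forall fun s _ => ?_)
  exact (hG v hv).tendsto.comp (tendsto_nhdsWithin_iff.2
    ⟨h s, .of_forall fun x => cdf_mem_Icc (κ s) x⟩)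

lemma integrable_cdfTimeIntegral_mul {f : ℝ → ℝ} (hf : Integrable f) :
    Integrable fun x => cdfTimeIntegral κ G t x * f x := by
  obtain ⟨C, hC⟩ := exists_norm_cdfTimeIntegral_le κ t hG
  exact hf.bdd_mul (measurable_cdfTimeIntegral κ t hG).aestronglyMeasurable (.of_forall hC)

end Kernels

section WeakSolution

variable {A B F₀ : ℝ → ℝ} {F : ℝ → ℝ → ℝ} {χ : ℝ → ℝ} {t : ℝ}

/-- Multiplying `χ` by a time cutoff equal to `1` on `[0, t]` gives an admissible test function. -/
lemma IsWeakSolution.integral_mul_sub_integral_mul (hF : IsWeakSolution A B F₀ F)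
    (hχ : ContDiff ℝ (⊤ : ℕ∞) χ) (hχc : HasCompactSupport χ) (ht : 0 ≤ t) :
    (∫ x, χ x * F t x) - ∫ x, χ x * F₀ x
      = ∫ x, ∫ s in (0 : ℝ)..t,
          ((1 / 2) * A (F s x) * deriv (deriv χ) x + B (F s x) * deriv χ x) := by
  let φ : ContDiffBump (0 : ℝ) := ⟨t + 1, t + 2, by positivity, by linarith⟩
  have hball {s : ℝ} (h : s ∈ Icc 0 t) : s ∈ Metric.ball 0 φ.rIn := by
    rw [mem_ball_zero_iff, Real.norm_of_nonneg h.1]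
    exact h.2.trans_lt (lt_add_one t)
  have hφ {s : ℝ} (h : s ∈ Icc 0 t) : φ s = 1 :=
    φ.one_of_mem_closedBall (Metric.ball_subset_closedBall (hball h))
  have hφ' {s : ℝ} (h : s ∈ Icc 0 t) : deriv φ s = 0 := by
    rw [(φ.eventuallyEq_one_of_mem_ball (hball h)).deriv_eq]
    exact deriv_const s 1
  have hsmooth : ContDiff ℝ (⊤ : ℕ∞) (uncurry fun s x => φ s * χ x) :=
    (φ.contDiff.comp contDiff_fst).mul (hχ.comp contDiff_snd)
  have hsupp : HasCompactSupport (uncurry fun s x => φ s * χ x) :=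
    .intro (φ.hasCompactSupport.isCompact.prod hχc.isCompact) fun p hp => by
      by_contra hne
      exact hp ⟨subset_tsupport _ (left_ne_zero_of_mul hne),
        subset_tsupport _ (right_ne_zero_of_mul hne)⟩
  have hweak := hF _ hsmooth hsupp t ht
  simp only [hφ ⟨ht, le_rfl⟩, hφ ⟨le_rfl, ht⟩, one_mul] at hweak
  rw [hweak]
  congr! 2 with x
  refine intervalIntegral.integral_congr fun s hs => ?_
  rw [uIcc_of_le ht] at hs
  simp only [deriv_mul_const_field, hφ hs, hφ' hs, one_mul]
  ring

variable {κ : Kernel ℝ ℝ} [IsMarkovKernel κ]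

lemma IsWeakSolution.integral_mul_cdf_sub_integral_mul (hF : IsWeakSolution A B F₀ F)
    (hA : ContinuousOn A (Icc 0 1)) (hB : ContinuousOn B (Icc 0 1))
    (hκ : ∀ s ∈ Icc 0 t, F s = cdfOf (κ s))
    (hχ : ContDiff ℝ (⊤ : ℕ∞) χ) (hχc : HasCompactSupport χ) (ht : 0 ≤ t) :
    (∫ x, χ x * cdf (κ t) x) - ∫ x, χ x * F₀ x
      = (1 / 2) * (∫ x, cdfTimeIntegral κ A t x * deriv (deriv χ) x)
        + ∫ x, cdfTimeIntegral κ B t x * deriv χ x := by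
  have hχ' := (contDiff_infty_iff_deriv.1 hχ).2
  have hχ'' := (contDiff_infty_iff_deriv.1 hχ').2
  have hinner (x : ℝ) : ∫ s in (0 : ℝ)..t,
      ((1 / 2) * A (F s x) * deriv (deriv χ) x + B (F s x) * deriv χ x)
        = (1 / 2) * (cdfTimeIntegral κ A t x * deriv (deriv χ) x)
          + cdfTimeIntegral κ B t x * deriv χ x := by
    have hcongr : EqOn
        (fun s => (1 / 2) * A (F s x) * deriv (deriv χ) x + B (F s x) * deriv χ x)
        (fun s => (1 / 2) * A (cdf (κ s) x) * deriv (deriv χ) x + B (cdf (κ s) x) * deriv χ x)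
        (uIcc 0 t) := fun s hs => by
      simp only [hκ s (uIcc_of_le ht ▸ hs), cdfOf_eq_cdf]
    rw [intervalIntegral.integral_congr hcongr, intervalIntegral.integral_add
      (((intervalIntegrable_comp_cdf_kernel κ t hA x).const_mul _).mul_const _)
      ((intervalIntegrable_comp_cdf_kernel κ t hB x).mul_const _),
      intervalIntegral.integral_mul_const, intervalIntegral.integral_mul_const,
      intervalIntegral.integral_const_mul, mul_assoc]
    rfl
  have hFt : F t = cdf (κ t) := (hκ t ⟨ht, le_rfl⟩).trans (cdfOf_eq_cdf _)
  rw [← hFt, hF.integral_mul_sub_integral_mul hχ hχc ht]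
  simp only [hinner]
  rw [integral_add ((integrable_cdfTimeIntegral_mul κ t hA
      (hχ''.continuous.integrable_of_hasCompactSupport hχc.deriv.deriv)).const_mul _)
    (integrable_cdfTimeIntegral_mul κ t hB
      (hχ'.continuous.integrable_of_hasCompactSupport hχc.deriv)), integral_const_mul]

lemma IsWeakSolution.integral_cdf_sub_cdf_eq {μ : Measure ℝ} (hF : IsWeakSolution A B (cdf μ) F)
    (hA : ContinuousOn A (Icc 0 1)) (hB : ContinuousOn B (Icc 0 1)) (ht : 0 ≤ t)
    (hκ : ∀ s ∈ Icc 0 t, F s = cdfOf (κ s)) (hint : Integrable fun x => cdf (κ t) x - cdf μ x) :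
    ∫ x, (cdf (κ t) x - cdf μ x) = t * B 0 - t * B 1 := by
  let χ : ContDiffBump (0 : ℝ) := default
  have hχ0 : χ 0 = 1 := χ.one_of_mem_closedBall (Metric.mem_closedBall_self χ.rIn_pos.le)
  obtain ⟨CA, hCA⟩ := exists_norm_cdfTimeIntegral_le κ t hA
  obtain ⟨CB, hCB⟩ := exists_norm_cdfTimeIntegral_le κ t hB
  have hleft := tendsto_integral_comp_inv_mul_left_mul χ.continuous
    (fun x => (Real.norm_of_nonneg χ.nonneg).trans_le χ.le_one) hint
  have hdiffusion := tendsto_integral_mul_deriv_deriv_comp_inv_mul_left hCA χ.contDiff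
    χ.hasCompactSupport
  have hdrift := tendsto_integral_mul_deriv_comp_inv_mul_left
    (measurable_cdfTimeIntegral κ t hB) hCB
    (tendsto_cdfTimeIntegral κ t hB (left_mem_Icc.2 zero_le_one) fun s => tendsto_cdf_atBot _)
    (tendsto_cdfTimeIntegral κ t hB (right_mem_Icc.2 zero_le_one) fun s => tendsto_cdf_atTop _)
    χ.contDiff χ.hasCompactSupport
  have hweak : ∀ᶠ R : ℝ in atTop, ∫ x, χ (R⁻¹ * x) * (cdf (κ t) x - cdf μ x)
      = (1 / 2) * (∫ x, cdfTimeIntegral κ A t x * deriv (deriv fun x => χ (R⁻¹ * x)) x)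
        + ∫ x, cdfTimeIntegral κ B t x * deriv (fun x => χ (R⁻¹ * x)) x := by
    filter_upwards [eventually_gt_atTop 0] with R hR
    have hsmooth : ContDiff ℝ (⊤ : ℕ∞) fun x => χ (R⁻¹ * x) := χ.contDiff.comp (by fun_prop)
    have hsupp : HasCompactSupport fun x => χ (R⁻¹ * x) :=
      χ.hasCompactSupport.comp_homeomorph (Homeomorph.mulLeft₀ R⁻¹ (inv_ne_zero hR.ne'))
    have hχR : Integrable fun x => χ (R⁻¹ * x) :=
      hsmooth.continuous.integrable_of_hasCompactSupport hsupp
    rw [← hF.integral_mul_cdf_sub_integral_mul hA hB hκ hsmooth hsupp ht,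
      ← integral_sub (integrable_mul_cdf _ hχR) (integrable_mul_cdf _ hχR)]
    simp only [mul_sub]
  simpa [hχ0, sub_mul] using tendsto_nhds_unique_of_eventuallyEq hleft
    ((hdiffusion.const_mul (1 / 2)).add hdrift) hweak

end WeakSolution

lemma continuousOn_primitive {f : ℝ → ℝ} (hf : ContinuousOn f (Icc 0 1)) :
    ContinuousOn (primitive f) (Icc 0 1) := by
  rw [← uIcc_of_le (zero_le_one' ℝ)] at hf ⊢
  exact intervalIntegral.continuousOn_primitive_interval hf.integrableOn_uIcc

lemma primitive_zero (f : ℝ → ℝ) : primitive f 0 = 0 := intervalIntegral.integral_same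

theorem expectation_evolution_general {A B : ℝ → ℝ} (hA : ContinuousOn A (Icc 0 1))
    (hB : ContinuousOn B (Icc 0 1)) {m : Measure ℝ} [IsProbabilityMeasure m]
    (hm : Integrable (fun x => x) m) {F : ℝ → ℝ → ℝ} (hF : IsWeakSolution A B (cdfOf m) F)
    {κ : Kernel ℝ ℝ} [IsMarkovKernel κ] {t : ℝ} (ht : 0 ≤ t)
    (hκ : ∀ s ∈ Icc 0 t, F s = cdfOf (κ s)) (hκt : Integrable (fun x => x) (κ t)) :
    ∫ u in Ioo 0 1, pinv (F t) u
      = (∫ u in Ioo 0 1, pinv (cdfOf m) u) + t * (B 1 - B 0) := by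
  rw [cdfOf_eq_cdf] at hF
  have hevol := hF.integral_cdf_sub_cdf_eq hA hB ht hκ (integrable_cdf_sub_cdf hκt hm)
  rw [integral_cdf_sub_cdf hκt hm] at hevol
  rw [hκ t ⟨ht, le_rfl⟩, cdfOf_eq_cdf, cdfOf_eq_cdf, integral_pinv_cdf, integral_pinv_cdf]
  linarith

end

/-- Evolution of the expectation of the probabilistic solution: under (D3), if `F_s`
is continuous for every `s > 0`, then `∫₀¹ F_t⁻¹(u) du = ∫₀¹ F₀⁻¹(u) du + t B(1)`;
in particular the expectation is constant in time when `B(1) = 0`. -/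
theorem expectation_evolution
    (a b : ℝ → ℝ)
    (ha : ContinuousOn a (Set.Icc 0 1)) (hb : ContinuousOn b (Set.Icc 0 1))
    (ha0 : ∀ u ∈ Set.Icc (0:ℝ) 1, 0 ≤ a u)
    (hD3 : ∃ c > (0:ℝ), ∀ u ∈ Set.Icc (0:ℝ) 1, c ≤ a u)
    (m : Measure ℝ) [IsProbabilityMeasure m]
    (hm : Integrable (fun x => |x|) m)
    (F : ℝ → ℝ → ℝ)
    (hF : IsWeakSolution (primitive a) (primitive b) (cdfOf m) F) (hFmem : MemF F)
    (hFcont : ∀ s : ℝ, 0 < s → Continuous (fun x => F s x)) :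
    ∀ t : ℝ, 0 ≤ t →
      (∫ u in Set.Ioo (0:ℝ) 1, pinv (F t) u)
        = (∫ u in Set.Ioo (0:ℝ) 1, pinv (cdfOf m) u) + t * primitive b 1 := by
  intro t ht
  obtain ⟨κ, _, hκ, hκint⟩ := hFmem.exists_kernel
  simpa only [primitive_zero, sub_zero] using
    expectation_evolution_general (continuousOn_primitive ha) (continuousOn_primitive hb)
      ((integrable_norm_iff aestronglyMeasurable_id).1 hm) hF ht (fun s hs => hκ s hs.1)
      (hκint t ht)
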